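/- arXiv:2403.13957 — 2 statements merged into one kernel-verified Lean document; each statement's English description precedes it below -/
import Mathlib

section
/- Let A be an n × m matrix over F with columns C_0, ..., C_{m-1}. For an index i, the following are equivalent: (1) C_i lies in the span of the columns C_j with j < i; (2) i is a red index of the nullspace of A (viewed as a subspace of F^m). -/
/-!
Since `A x = ∑ j, x j • C_j`, null vectors of `A` are exactly the linear relations among its columns.
A relation expressing `C_i` through earlier columns is, up to scaling by the coefficient of `C_i`,
the same thing as a null vector whose last nonzero entry is at `i`.
-/

open Matrix

variable {F : Type*} [Field F] {m : ℕ}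

/-- A (nonzero) vector `x` terminates at position `j` if `x j ≠ 0` and all later entries vanish. -/
def TerminatesAt (x : Fin m → F) (j : Fin m) : Prop :=
  x j ≠ 0 ∧ ∀ k, j < k → x k = 0

/-- `j` is a red index of `W` if some element of `W` terminates at `j`. -/
def IsRedIndex (W : Submodule F (Fin m → F)) (j : Fin m) : Prop :=
  ∃ x ∈ W, TerminatesAt x j

/-- A column `C i` of a matrix `A` is a linear combination of the preceding columns
iff `i` is a red index of the nullspace of `A`. -/
theorem column_in_span_iff_red_index_of_nullspace (F : Type*) [Field F] (n m : ℕ)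
    (A : Matrix (Fin n) (Fin m) F) (i : Fin m) :
    (Aᵀ i ∈ Submodule.span F ((fun j : Fin m => Aᵀ j) '' {j | j < i})) ↔
      IsRedIndex (LinearMap.ker A.mulVecLin) i := by
  have hA (x : Fin m → F) : A.mulVecLin x = ∑ j, x j • Aᵀ j := by
    simp [Matrix.mulVec_eq_sum]
  constructor
  · intro h
    obtain ⟨l, hl, hsum⟩ := (Finsupp.mem_span_image_iff_linearCombination F).1 h
    have hl0 (k : Fin m) (hk : ¬ k < i) : l k = 0 := by
      by_contra hne
      exact hk (hl (Finsupp.mem_support_iff.2 hne))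
    -- The relation `C_i = ∑ l_j C_j` gives the null vector `e_i - l`, which terminates at `i`.
    refine ⟨Pi.single i 1 - ⇑l, ?_, ?_, ?_⟩
    · rw [LinearMap.mem_ker, map_sub, hA l]
      rw [Finsupp.linearCombination_apply, Finsupp.sum_fintype _ _ (by simp)] at hsum
      simp only [hsum, Matrix.mulVecLin_apply, Matrix.mulVec_single_one]
      exact sub_self (Aᵀ i)
    · simp [hl0 i (lt_irrefl i)]
    · intro k hk
      simp [hl0 k hk.not_gt, hk.ne']
  · rintro ⟨x, hx, hxi, hxk⟩
    rw [LinearMap.mem_ker, hA, ← Finset.add_sum_erase _ _ (Finset.mem_univ i)] at hx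
    -- Since `x i` is invertible, it suffices that `x i • C_i = -∑_{j ≠ i} x j • C_j` is in the span.
    rw [← Submodule.smul_mem_iff _ hxi, eq_neg_of_add_eq_zero_left hx]
    refine Submodule.neg_mem _ (Submodule.sum_mem _ fun j hj => ?_)
    rcases lt_or_gt_of_ne (Finset.ne_of_mem_erase hj) with hji | hij
    · exact Submodule.smul_mem _ _ (Submodule.subset_span ⟨j, hji, rfl⟩)
    · simp [hxk j hij]
end

section
/- Let A be an n × m matrix over F, and let i_1 < i_2 < ... < i_k be the lime indices of the row space of A (a subspace of F^m). Then the columns C_{i_1}, C_{i_2}, ..., C_{i_k} of A form a basis of the column space of A. -/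
/-!
The elements of the row space are the vectors `(φ C₀, …, φ C_{m-1})`, where `φ` runs over the
linear functionals on `F ^ n` and `C_j` are the columns of `A` (`mem_rowSpace_iff_dual`). So `j` is
a lime index exactly when some functional kills all columns before `C_j` but not `C_j` itself.

Independence: in a vanishing combination of lime columns, applying such a functional for the largest
index with nonzero coefficient isolates that coefficient and shows that it is zero.
Spanning: if `j` is not a lime index, no functional separates `C_j` from the span of the earlier
columns, so `C_j` lies in that span, and strong induction on `j` applies.
-/

open Matrix

variable {F : Type*} [Field F] {m : ℕ}

/-- A (nonzero) vector `x` originates at position `j` if `x j ≠ 0` and all earlier entries vanish. -/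
def OriginatesAt (x : Fin m → F) (j : Fin m) : Prop :=
  x j ≠ 0 ∧ ∀ k, k < j → x k = 0

/-- `j` is a lime index of `W` if some element of `W` originates at `j`. -/
def IsLimeIndex (W : Submodule F (Fin m → F)) (j : Fin m) : Prop :=
  ∃ x ∈ W, OriginatesAt x j

/-- The row space of a matrix: the span of its rows. -/
def rowSpace {n m : ℕ} (A : Matrix (Fin n) (Fin m) F) : Submodule F (Fin m → F) :=
  Submodule.span F (Set.range fun i : Fin n => A i)

/-- The column space of a matrix: the span of its columns. -/
def colSpace {n m : ℕ} (A : Matrix (Fin n) (Fin m) F) : Submodule F (Fin n → F) :=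
  Submodule.span F (Set.range fun j : Fin m => Aᵀ j)

/-- The row space consists of the vectors of values of a linear functional on the columns. -/
lemma mem_rowSpace_iff_dual {F : Type*} [Field F] {n m : ℕ} (A : Matrix (Fin n) (Fin m) F)
    (x : Fin m → F) :
    x ∈ rowSpace A ↔ ∃ φ : Module.Dual F (Fin n → F), ∀ j, φ (Aᵀ j) = x j := by
  have hrow : rowSpace A = LinearMap.range A.vecMulLinear := (range_vecMulLinear A).symm
  rw [hrow, LinearMap.mem_range]
  constructor
  · rintro ⟨y, rfl⟩
    exact ⟨dotProductEquiv F (Fin n) y, fun j => rfl⟩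
  · rintro ⟨φ, hφ⟩
    refine ⟨(dotProductEquiv F (Fin n)).symm φ, funext fun j => ?_⟩
    rw [← hφ j]
    exact congrArg (fun ψ : Module.Dual F (Fin n → F) => ψ (Aᵀ j))
      ((dotProductEquiv F (Fin n)).apply_symm_apply φ)

lemma linearIndependent_lime_columns {F : Type*} [Field F] {n m : ℕ}
    (A : Matrix (Fin n) (Fin m) F) :
    LinearIndependent F
      (fun j : {j : Fin m // IsLimeIndex (rowSpace A) j} => Aᵀ j.1) := by
  classical
  have : Fintype {j : Fin m // IsLimeIndex (rowSpace A) j} := Fintype.ofFinite _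
  rw [Fintype.linearIndependent_iff]
  intro c hc j
  -- Downward induction: all coefficients at larger indices are already known to vanish.
  induction j using WellFoundedGT.induction with
  | ind j ih =>
    obtain ⟨x, hx, hxj, hlt⟩ := j.2
    obtain ⟨φ, hφ⟩ := (mem_rowSpace_iff_dual A x).1 hx
    have h := congrArg φ hc
    rw [map_sum, map_zero, Finset.sum_eq_single j] at h
    · simpa [hφ, hxj] using h
    · intro k _ hkj
      rcases lt_or_gt_of_ne hkj with hk | hk
      · simp [hφ, hlt k.1 hk]
      · simp [ih k hk]
    · simp

/-- A column at a non-lime index is a combination of earlier columns. -/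
lemma column_mem_span_of_not_lime {F : Type*} [Field F] {n m : ℕ}
    (A : Matrix (Fin n) (Fin m) F) (j : Fin m) (hj : ¬ IsLimeIndex (rowSpace A) j) :
    Aᵀ j ∈ Submodule.span F (Aᵀ '' Set.Iio j) := by
  by_contra hmem
  obtain ⟨φ, hφj, hφ⟩ := Submodule.exists_dual_map_eq_bot_of_notMem hmem inferInstance
  refine hj ⟨fun k => φ (Aᵀ k), (mem_rowSpace_iff_dual A _).2 ⟨φ, fun _ => rfl⟩, hφj, ?_⟩
  intro k hk
  have : φ (Aᵀ k) ∈ (Submodule.span F (Aᵀ '' Set.Iio j)).map φ :=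
    Submodule.mem_map_of_mem (Submodule.subset_span ⟨k, hk, rfl⟩)
  rwa [hφ, Submodule.mem_bot] at this

lemma column_mem_span_lime {F : Type*} [Field F] {n m : ℕ}
    (A : Matrix (Fin n) (Fin m) F) (j : Fin m) :
    Aᵀ j ∈ Submodule.span F
      (Set.range fun j : {j : Fin m // IsLimeIndex (rowSpace A) j} => Aᵀ j.1) := by
  induction j using WellFoundedLT.induction with
  | ind j ih =>
    by_cases hj : IsLimeIndex (rowSpace A) j
    · exact Submodule.subset_span ⟨⟨j, hj⟩, rfl⟩
    · refine Submodule.span_le.2 ?_ (column_mem_span_of_not_lime A j hj)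
      rintro _ ⟨k, hk, rfl⟩
      exact ih k hk

/-- The columns of `A` indexed by the lime indices of the row space of `A` form a basis of
the column space of `A`. -/
theorem lime_columns_basis_of_colSpace (F : Type*) [Field F] (n m : ℕ)
    (A : Matrix (Fin n) (Fin m) F) :
    LinearIndependent F
      (fun j : {j : Fin m // IsLimeIndex (rowSpace A) j} => Aᵀ j.1) ∧
    Submodule.span F
      (Set.range fun j : {j : Fin m // IsLimeIndex (rowSpace A) j} => Aᵀ j.1) =
      colSpace A := by
  refine ⟨linearIndependent_lime_columns A, le_antisymm (Submodule.span_mono ?_)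
    (Submodule.span_le.2 ?_)⟩
  · rintro _ ⟨j, rfl⟩
    exact ⟨j.1, rfl⟩
  · rintro _ ⟨j, rfl⟩
    exact column_mem_span_lime A j
end
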